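/- arXiv:1103.1462 — 2 statements merged into one kernel-verified Lean document; each statement's English description precedes it below -/
import Mathlib

section
/- Let D ⊆ ℂ be open and let f : ℂ → ℂ be nowhere-vanishing on D. Suppose that for every point x₀ + i·y₀ ∈ D there exist a neighborhood and functions R : ℝ × ℝ → ℝ and Θ : ℝ × ℝ → ℝ, differentiable (as real functions of two variables) on that neighborhood, with R > 0, f(x + i·y) = R(x, y) · exp(i·Θ(x, y)) on the neighborhood, and satisfying the Cauchy–Riemann *conditions there: the partial derivative in x of (x, y) ↦ Real.log (R(x, y)) equals the partial derivative in y of Θ, and the partial derivative in y of (x, y) ↦ Real.log (R(x, y)) equals the negative of the partial derivative in x of Θ. Then f is complex-differentiable (holomorphic) at every point of D; in particular the multiplicative derivative f*(z) = exp(f'(z)/f(z)) exists at every z ∈ D. -/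
open Complex

/-- Theorem 2 (sufficiency direction): if `f` is nowhere-vanishing on the open set `D` and
near every point of `D` admits a differentiable polar decomposition `f = R·exp(i·Θ)` with
`R > 0` satisfying the Cauchy–Riemann *conditions, then `f` is holomorphic at every point of
`D`; in particular the multiplicative derivative `f*(z) = exp (f'(z)/f(z))` exists on `D`. -/
theorem star_holomorphic_of_cauchy_riemann_star
    (D : Set ℂ) (hD : IsOpen D) (f : ℂ → ℂ)
    (hne : ∀ z ∈ D, f z ≠ 0)
    (hloc : ∀ z ∈ D, ∃ U ∈ nhds ((z.re, z.im) : ℝ × ℝ), ∃ R Θ : ℝ × ℝ → ℝ,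
      (∀ p ∈ U, DifferentiableAt ℝ R p) ∧
      (∀ p ∈ U, DifferentiableAt ℝ Θ p) ∧
      (∀ p ∈ U, 0 < R p) ∧
      (∀ p ∈ U, f ((p.1 : ℂ) + (p.2 : ℂ) * I) = (R p : ℂ) * Complex.exp (I * (Θ p : ℂ))) ∧
      (∀ p ∈ U,
        deriv (fun x : ℝ => Real.log (R (x, p.2))) p.1 =
          deriv (fun y : ℝ => Θ (p.1, y)) p.2 ∧
        deriv (fun y : ℝ => Real.log (R (p.1, y))) p.2 =
          - deriv (fun x : ℝ => Θ (x, p.2)) p.1)) :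
    ∀ z ∈ D, DifferentiableAt ℂ f z := by
  intro z hz
  obtain ⟨U, hU, R, Θ, hR, hΘ, hpos, hf, hCR⟩ := hloc z hz
  have hp := mem_of_mem_nhds hU
  set p : ℝ × ℝ := (z.re, z.im) with hpdef
  have hL : HasFDerivAt (fun q => Real.log (R q)) (fderiv ℝ (fun q => Real.log (R q)) p) p :=
    ((hR p hp).log (hpos p hp).ne').hasFDerivAt
  have hT : HasFDerivAt Θ (fderiv ℝ Θ p) p := (hΘ p hp).hasFDerivAt
  generalize fderiv ℝ (fun q => Real.log (R q)) p = L at hL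
  generalize fderiv ℝ Θ p = T at hT
  have hx : HasDerivAt (fun x : ℝ => (x, p.2)) ((1 : ℝ), (0 : ℝ)) p.1 :=
    (hasDerivAt_id p.1).prodMk (hasDerivAt_const p.1 p.2)
  have hy : HasDerivAt (fun y : ℝ => (p.1, y)) ((0 : ℝ), (1 : ℝ)) p.2 :=
    (hasDerivAt_const p.2 p.1).prodMk (hasDerivAt_id p.2)
  have h1 : deriv (fun x : ℝ => Real.log (R (x, p.2))) p.1 = L (1, 0) :=
    (hL.comp_hasDerivAt (x := p.1) (f := fun x : ℝ => (x, p.2)) hx).deriv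
  have h2 : deriv (fun y : ℝ => Real.log (R (p.1, y))) p.2 = L (0, 1) :=
    (hL.comp_hasDerivAt (x := p.2) (f := fun y : ℝ => (p.1, y)) hy).deriv
  have h3 : deriv (fun x : ℝ => Θ (x, p.2)) p.1 = T (1, 0) :=
    (hT.comp_hasDerivAt (x := p.1) (f := fun x : ℝ => (x, p.2)) hx).deriv
  have h4 : deriv (fun y : ℝ => Θ (p.1, y)) p.2 = T (0, 1) :=
    (hT.comp_hasDerivAt (x := p.2) (f := fun y : ℝ => (p.1, y)) hy).deriv
  obtain ⟨c1, c2⟩ := hCR p hp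
  rw [h1, h4] at c1
  rw [h2, h3] at c2
  let e : ℂ →L[ℝ] ℝ × ℝ := reCLM.prod imCLM
  have he : HasFDerivAt (fun w : ℂ => (w.re, w.im)) e z := e.hasFDerivAt
  have hLe : HasFDerivAt (fun w : ℂ => ((Real.log (R (w.re, w.im)) : ℝ) : ℂ))
      (ofRealCLM.comp (L.comp e)) z :=
    ofRealCLM.hasFDerivAt.comp z (HasFDerivAt.comp z (f := fun w : ℂ => (w.re, w.im)) hL he)
  have hTe : HasFDerivAt (fun w : ℂ => ((Θ (w.re, w.im) : ℝ) : ℂ))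
      (ofRealCLM.comp (T.comp e)) z :=
    ofRealCLM.hasFDerivAt.comp z (HasFDerivAt.comp z (f := fun w : ℂ => (w.re, w.im)) hT he)
  have hg := hLe.add (hTe.const_mul I)
  have hgc : DifferentiableAt ℂ (fun w : ℂ => ((Real.log (R (w.re, w.im)) : ℝ) : ℂ) +
      I * ((Θ (w.re, w.im) : ℝ) : ℂ)) z := by
    refine differentiableAt_complex_iff_differentiableAt_real.2 ⟨hg.differentiableAt, ?_⟩
    erw [hg.fderiv]
    simp [e, c1, c2]
    linear_combination (-(T (1, 0) : ℂ)) * I_mul_I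
  refine hgc.cexp.congr_of_eventuallyEq ?_
  have hev : ∀ᶠ w : ℂ in nhds z, (w.re, w.im) ∈ U := he.continuousAt hU
  filter_upwards [hev] with w hw
  have h := hf _ hw
  simp only [re_add_im] at h
  rw [h, Complex.exp_add, ← Complex.ofReal_exp, Real.exp_log (hpos _ hw)]
end

section
/- Let D ⊆ ℝ × ℝ be open and connected, let f : ℝ × ℝ → ℝ be positive and continuously differentiable on D, and let γ = (x, y) : [a, b] → D (a < b) be a piecewise continuously differentiable curve. Then Real.exp of the integral ∫_a^b [ (∂₁f)(γ(t))·x'(t)/f(γ(t)) + (∂₂f)(γ(t))·y'(t)/f(γ(t)) ] dt equals f(γ(b))/f(γ(a)). (Equivalently, the line multiplicative integral ∫_C (f*_x)^{dx} (f*_y)^{dy} of the partial multiplicative derivatives of f along C equals f at the endpoint divided by f at the initial point.) -/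
/-- A curve `γ` is piecewise continuously differentiable on `[a, b]` if it is continuous
there and `[a, b]` splits into finitely many subintervals on each of which `γ` is `C¹`. -/
def PiecewiseC1On {E : Type*} [NormedAddCommGroup E] [NormedSpace ℝ E]
    (γ : ℝ → E) (a b : ℝ) : Prop :=
  ContinuousOn γ (Set.Icc a b) ∧
  ∃ (m : ℕ) (t : ℕ → ℝ), 0 < m ∧ t 0 = a ∧ t m = b ∧
    (∀ k < m, t k < t (k + 1)) ∧
    ∀ k < m, ContDiffOn ℝ 1 γ (Set.Icc (t k) (t (k + 1)))

theorem piece_aux (D : Set (ℝ × ℝ)) (hD : IsOpen D)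
    (f : ℝ × ℝ → ℝ) (hfpos : ∀ p ∈ D, 0 < f p) (hf : ContDiffOn ℝ 1 f D)
    (c d : ℝ) (hcd : c < d) (γ : ℝ → ℝ × ℝ)
    (hγD : ∀ t ∈ Set.Icc c d, γ t ∈ D) (hγ : ContDiffOn ℝ 1 γ (Set.Icc c d)) :
    IntervalIntegrable (fun t => ((fderiv ℝ f (γ t)) (1, 0) * deriv (fun s => (γ s).1) t +
         (fderiv ℝ f (γ t)) (0, 1) * deriv (fun s => (γ s).2) t) / f (γ t))
         MeasureTheory.volume c d ∧
    (∫ t in c..d, ((fderiv ℝ f (γ t)) (1, 0) * deriv (fun s => (γ s).1) t +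
         (fderiv ℝ f (γ t)) (0, 1) * deriv (fun s => (γ s).2) t) / f (γ t)) =
      Real.log (f (γ d)) - Real.log (f (γ c)) := by
  have hg : ContDiffOn ℝ 1 (fun t => Real.log (f (γ t))) (Set.Icc c d) :=
    ContDiffOn.log (hf.comp hγ hγD) (fun t ht => (hfpos _ (hγD t ht)).ne')
  have key : ∀ t ∈ Set.Ioo c d, HasDerivAt (fun t => Real.log (f (γ t)))
      (((fderiv ℝ f (γ t)) (1, 0) * deriv (fun s => (γ s).1) t +
         (fderiv ℝ f (γ t)) (0, 1) * deriv (fun s => (γ s).2) t) / f (γ t)) t := by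
    intro t ht
    have htI := Set.Ioo_subset_Icc_self ht
    have h1 : HasDerivAt γ (deriv γ t) t :=
      ((hγ.differentiableOn one_ne_zero).differentiableAt
        (Icc_mem_nhds ht.1 ht.2)).hasDerivAt
    have h2 : HasFDerivAt f (fderiv ℝ f (γ t)) (γ t) :=
      ((hf.differentiableOn one_ne_zero).differentiableAt
        (hD.mem_nhds (hγD t htI))).hasFDerivAt
    have h3 := (h2.comp_hasDerivAt t h1).log (hfpos _ (hγD t htI)).ne'
    have e1 : deriv (fun s => (γ s).1) t = (deriv γ t).1 :=
      ((ContinuousLinearMap.fst ℝ ℝ ℝ).hasFDerivAt.comp_hasDerivAt t h1).deriv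
    have e2 : deriv (fun s => (γ s).2) t = (deriv γ t).2 :=
      ((ContinuousLinearMap.snd ℝ ℝ ℝ).hasFDerivAt.comp_hasDerivAt t h1).deriv
    have e3 : fderiv ℝ f (γ t) (deriv γ t) = (fderiv ℝ f (γ t)) (1, 0) * (deriv γ t).1 +
        (fderiv ℝ f (γ t)) (0, 1) * (deriv γ t).2 := by
      have : deriv γ t = (deriv γ t).1 • ((1 : ℝ), (0 : ℝ)) +
          (deriv γ t).2 • ((0 : ℝ), (1 : ℝ)) := by
        ext <;> simp
      conv_lhs => rw [this]
      rw [map_add, map_smul, map_smul, smul_eq_mul, smul_eq_mul]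
      ring
    rw [e1, e2, ← e3]
    exact h3
  have hint : IntervalIntegrable (fun t => ((fderiv ℝ f (γ t)) (1, 0) * deriv (fun s => (γ s).1) t +
         (fderiv ℝ f (γ t)) (0, 1) * deriv (fun s => (γ s).2) t) / f (γ t))
         MeasureTheory.volume c d := by
    have hc : ContinuousOn (derivWithin (fun t => Real.log (f (γ t))) (Set.Icc c d))
        (Set.Icc c d) := hg.continuousOn_derivWithin (uniqueDiffOn_Icc hcd) le_rfl
    have hi := hc.intervalIntegrable_of_Icc (μ := MeasureTheory.volume) hcd.le
    rw [intervalIntegrable_iff_integrableOn_Ioo_of_le hcd.le] at hi ⊢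
    refine hi.congr_fun (fun t ht => ?_) measurableSet_Ioo
    rw [derivWithin_of_mem_nhds (Icc_mem_nhds ht.1 ht.2), (key t ht).deriv]
  exact ⟨hint, intervalIntegral.integral_eq_sub_of_hasDerivAt_of_le hcd.le hg.continuousOn
    key hint⟩

/-- Theorem 3 (fundamental theorem of calculus for line *integrals): for a positive
continuously differentiable `f` on the open connected set `D` and a piecewise `C¹` curve
`γ = (x, y)` in `D`, the line multiplicative integral of the partial multiplicative
derivatives of `f` along the curve, namely
`exp (∫_a^b [(∂₁f)(γ t)·x'(t) + (∂₂f)(γ t)·y'(t)]/f(γ t) dt)`, equals `f(γ b)/f(γ a)`. -/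
theorem fundamental_theorem_line_multiplicative_integral
    (D : Set (ℝ × ℝ)) (hD : IsOpen D) (hDconn : IsConnected D)
    (f : ℝ × ℝ → ℝ) (hfpos : ∀ p ∈ D, 0 < f p) (hf : ContDiffOn ℝ 1 f D)
    (a b : ℝ) (hab : a < b) (γ : ℝ → ℝ × ℝ)
    (hγD : ∀ t ∈ Set.Icc a b, γ t ∈ D) (hγ : PiecewiseC1On γ a b) :
    Real.exp (∫ t in a..b,
        ((fderiv ℝ f (γ t)) (1, 0) * deriv (fun s => (γ s).1) t +
         (fderiv ℝ f (γ t)) (0, 1) * deriv (fun s => (γ s).2) t) / f (γ t)) =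
      f (γ b) / f (γ a) := by
  obtain ⟨-, m, t, hm, h0, hmb, hlt, hC⟩ := hγ
  have mono : ∀ j ≤ m, ∀ i ≤ j, t i ≤ t j := by
    intro j
    induction j with
    | zero => intro _ i hi; rw [Nat.le_zero.mp hi]
    | succ j ih =>
      intro hj i hi
      rcases Nat.lt_or_ge j i with h | h
      · rw [show i = j + 1 by omega]
      · exact (ih (by omega) i h).trans (hlt j (by omega)).le
  have hp := fun k (hk : k < m) => piece_aux D hD f hfpos hf (t k) (t (k + 1)) (hlt k hk) γ
    (fun s hs => hγD s ⟨h0 ▸ (mono k hk.le 0 (Nat.zero_le _)).trans hs.1,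
      hs.2.trans (hmb ▸ mono m le_rfl (k + 1) hk)⟩) (hC k hk)
  have hs := intervalIntegral.sum_integral_adjacent_intervals (fun k hk => (hp k hk).1)
  rw [Finset.sum_congr rfl (fun k hk => (hp k (Finset.mem_range.mp hk)).2),
    Finset.sum_range_sub (fun k => Real.log (f (γ (t k)))), h0, hmb] at hs
  rw [← hs, Real.exp_sub, Real.exp_log (hfpos _ (hγD b ⟨hab.le, le_rfl⟩)),
    Real.exp_log (hfpos _ (hγD a ⟨le_rfl, hab.le⟩))]
end
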